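/- Let α ≥ 3, β > 0, t₀ > 0, let Φ : H → ℝ be convex and twice continuously differentiable with argmin Φ nonempty and with ∇Φ Lipschitz continuous on bounded subsets of H, let g : [t₀, ∞) → H be continuous with ∫_{t₀}^∞ t‖g(t)‖ dt < ∞, and let x : [t₀, ∞) → H be a twice continuously differentiable curve satisfying the perturbed equation ẍ(t) + (α/t)ẋ(t) + β∇²Φ(x(t))ẋ(t) + ∇Φ(x(t)) = g(t) for all t ≥ t₀. Then there is a constant C such that Φ(x(t)) − min Φ ≤ C/t² for all t ≥ t₀. -/

import Mathlib

/-!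
Let `W = Φ ∘ x - Φ xstar` and `v = (α - 1) (x - xstar) + t (x' + β ∇Φ(x))`; the weight `α - 1` is
the one for which the velocity drops out of the derivative, leaving `v' = (β - t) ∇Φ(x) + t g`. In
the derivative of `E = t (t - β) W + ‖v‖² / 2` the terms in `⟪∇Φ(x), x'⟫` then cancel, and convexity
gives `E' ≤ ((3 - α) t + (α - 2) β) W + t ⟪g, v⟫` for `t ≥ β`. As soon as `t ≥ 2β`, `E` dominates
`t² W / 2` and `‖v‖² / 2`, so `α ≥ 3` yields `E' ≤ (2 (α - 2) β / t² + t ‖g‖) (E + 1)`, and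
Grönwall's inequality with an integrable rate bounds `E`, hence `t² W`.
-/

open Filter MeasureTheory Set
open scoped Topology RealInnerProductSpace

variable {H : Type*} [NormedAddCommGroup H] [InnerProductSpace ℝ H] [CompleteSpace H]

/-- `x`, together with its first and second derivatives `x'`, `x''`, is a twice continuously
differentiable solution of (DIN-AVD) on `[t₀, ∞)`:
`ẍ(t) + (α/t) ẋ(t) + β ∇²Φ(x(t)) ẋ(t) + ∇Φ(x(t)) = 0`. -/
def IsDINAVDSolution (α β t₀ : ℝ) (Φ : H → ℝ) (x x' x'' : ℝ → H) : Prop :=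
  (∀ t ∈ Set.Ici t₀, HasDerivAt x (x' t) t) ∧
  (∀ t ∈ Set.Ici t₀, HasDerivAt x' (x'' t) t) ∧
  ContinuousOn x'' (Set.Ici t₀) ∧
  ∀ t ∈ Set.Ici t₀,
    x'' t + (α / t) • x' t + β • (fderiv ℝ (gradient Φ) (x t)) (x' t)
      + gradient Φ (x t) = 0

lemma bddAbove_image_Ici_of_deriv_le_mul {u k : ℝ → ℝ} {a : ℝ} (hu : ∀ t ∈ Ici a, 0 < u t)
    (hdiff : ∀ t ∈ Ici a, DifferentiableAt ℝ u t) (hk : IntegrableOn k (Ici a))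
    (hle : ∀ t ∈ Ici a, deriv u t ≤ k t * u t) :
    BddAbove (u '' Ici a) := by
  refine ⟨Real.exp (Real.log (u a) + ∫ s in Ici a, ‖k s‖), forall_mem_image.2 fun t ht => ?_⟩
  have hlog (s : ℝ) (hs : s ∈ Ici a) :
      HasDerivAt (fun r => Real.log (u r)) (deriv u s / u s) s :=
    (hdiff s hs).hasDerivAt.log (hu s hs).ne'
  have hgrowth : Real.log (u t) - Real.log (u a) ≤ ∫ s in a..t, k s :=
    intervalIntegral.sub_le_integral_of_hasDeriv_right_of_le ht
      (fun s hs => (hlog s hs.1).continuousAt.continuousWithinAt)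
      (fun s hs => (hlog s hs.1.le).hasDerivWithinAt)
      (hk.mono_set Icc_subset_Ici_self)
      (fun s hs => (div_le_iff₀ (hu s hs.1.le)).2 (hle s hs.1.le))
  have htotal : ∫ s in a..t, k s ≤ ∫ s in Ici a, ‖k s‖ := calc
    ∫ s in a..t, k s = ∫ s in Ioc a t, k s := intervalIntegral.integral_of_le ht
    _ ≤ ∫ s in Ioc a t, ‖k s‖ := (Real.le_norm_self _).trans (norm_integral_le_integral_norm _)
    _ ≤ ∫ s in Ici a, ‖k s‖ :=
      setIntegral_mono_set hk.norm (.of_forall fun s => norm_nonneg (k s))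
        (Ioc_subset_Icc_self.trans Icc_subset_Ici_self).eventuallyLE
  rw [← Real.log_le_iff_le_exp (hu t ht)]
  linarith

lemma bddAbove_image_Ici_of_continuousOn_Icc {u : ℝ → ℝ} {a b : ℝ} (hab : a ≤ b)
    (hu : ContinuousOn u (Icc a b)) (hb : BddAbove (u '' Ici b)) : BddAbove (u '' Ici a) := by
  rw [← Icc_union_Ici_eq_Ici hab, image_union]
  exact (isCompact_Icc.bddAbove_image hu).union hb

lemma integrableOn_Ici_div_sq (c : ℝ) {a : ℝ} (ha : 0 < a) :
    IntegrableOn (fun t : ℝ => c / t ^ 2) (Ici a) := by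
  have hrpow : IntegrableOn (fun t : ℝ => c * t ^ (-2 : ℝ)) (Ici a) :=
    Iff.mpr integrableOn_Ici_iff_integrableOn_Ioi
      ((integrableOn_Ioi_rpow_of_lt (by norm_num) ha).const_mul c)
  refine hrpow.congr_fun (fun t ht => ?_) measurableSet_Ici
  simp only [Real.rpow_neg (ha.le.trans ht), Real.rpow_two, div_eq_mul_inv]

lemma fderiv_sub_le_of_convexOn {F : Type*} [NormedAddCommGroup F] [NormedSpace ℝ F] {s : Set F}
    {f : F → ℝ} {f' : F →L[ℝ] ℝ} {a b : F} (hf : ConvexOn ℝ s f) (ha : a ∈ s) (hb : b ∈ s)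
    (hf' : HasFDerivAt f f' a) : f' (b - a) ≤ f b - f a := by
  have hline : ConvexOn ℝ (AffineMap.lineMap a b ⁻¹' s) (f ∘ (AffineMap.lineMap a b : ℝ →ᵃ[ℝ] F)) :=
    hf.comp_affineMap _
  have hderiv : HasDerivAt (f ∘ (AffineMap.lineMap a b : ℝ →ᵃ[ℝ] F)) (f' (b - a)) 0 :=
    HasFDerivAt.comp_hasDerivAt 0 (by simpa only [AffineMap.lineMap_apply_zero] using hf')
      AffineMap.hasDerivAt_lineMap
  simpa [slope_def_field] using
    hline.le_slope_of_hasDerivAt (y := 1) (by simpa using ha) (by simpa using hb) one_pos hderiv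

lemma sub_le_inner_gradient_of_convexOn {s : Set H} {Φ : H → ℝ} {a b : H} (hΦ : ConvexOn ℝ s Φ)
    (ha : a ∈ s) (hb : b ∈ s) (hd : DifferentiableAt ℝ Φ a) :
    Φ a - Φ b ≤ ⟪gradient Φ a, a - b⟫ := by
  have h := fderiv_sub_le_of_convexOn hΦ ha hb hd.hasFDerivAt
  rw [← neg_sub a b, map_neg, ← inner_gradient_left] at h
  linarith

lemma contDiff_gradient {Φ : H → ℝ} {m n : WithTop ℕ∞} (hΦ : ContDiff ℝ n Φ) (hmn : m + 1 ≤ n) :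
    ContDiff ℝ m (gradient Φ) :=
  (InnerProductSpace.toDual ℝ H).symm.toContinuousLinearEquiv.contDiff.comp
    (hΦ.fderiv_right hmn)

lemma hasDerivAt_comp_inner_gradient {Φ : H → ℝ} {x : ℝ → H} {v : H} {t : ℝ}
    (hΦ : DifferentiableAt ℝ Φ (x t)) (hx : HasDerivAt x v t) :
    HasDerivAt (fun s => Φ (x s)) ⟪gradient Φ (x t), v⟫ t := by
  rw [inner_gradient_left]
  exact hΦ.hasFDerivAt.comp_hasDerivAt t hx

/-- The anchored velocity `(α - 1) (x - xstar) + t (x' + β ∇Φ(x))` of a trajectory `x` with velocity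
`x'`, whose squared norm is the kinetic part of the Lyapunov function `lyapunov`. -/
noncomputable def anchoredVelocity (α β : ℝ) (Φ : H → ℝ) (xstar : H) (x x' : ℝ → H) (t : ℝ) : H :=
  (α - 1) • (x t - xstar) + t • (x' t + β • gradient Φ (x t))

/-- The Lyapunov function of the inertial dynamics with Hessian-driven damping. The potential part
has a nonnegative weight only for `t ≥ β`. -/
noncomputable def lyapunov (α β : ℝ) (Φ : H → ℝ) (xstar : H) (x x' : ℝ → H) (t : ℝ) : ℝ :=
  t * (t - β) * (Φ (x t) - Φ xstar) + 1 / 2 * ‖anchoredVelocity α β Φ xstar x x' t‖ ^ 2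

section Lyapunov

variable {α β t : ℝ} {Φ : H → ℝ} {xstar : H} {x x' : ℝ → H}

lemma inner_gradient_anchoredVelocity :
    ⟪gradient Φ (x t), anchoredVelocity α β Φ xstar x x' t⟫ =
      (α - 1) * ⟪gradient Φ (x t), x t - xstar⟫
        + t * (⟪gradient Φ (x t), x' t⟫ + β * ‖gradient Φ (x t)‖ ^ 2) := by
  simp only [anchoredVelocity, inner_add_right, inner_smul_right, real_inner_self_eq_norm_sq]

lemma hasDerivAt_anchoredVelocity {x'' w : H} (ht : t ≠ 0)
    (hΦ : DifferentiableAt ℝ (gradient Φ) (x t)) (hx : HasDerivAt x (x' t) t)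
    (hx' : HasDerivAt x' x'' t)
    (heq : x'' + (α / t) • x' t + β • (fderiv ℝ (gradient Φ) (x t)) (x' t) + gradient Φ (x t) = w) :
    HasDerivAt (anchoredVelocity α β Φ xstar x x') ((β - t) • gradient Φ (x t) + t • w) t := by
  have hgrad : HasDerivAt (fun s => gradient Φ (x s)) (fderiv ℝ (gradient Φ) (x t) (x' t)) t :=
    hΦ.hasFDerivAt.comp_hasDerivAt t hx
  have hv := ((hx.sub_const xstar).const_smul (α - 1)).add
    ((hasDerivAt_id t).smul (hx'.add (hgrad.const_smul β)))
  refine hv.congr_deriv ?_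
  simp only [← heq, id, smul_add, smul_smul, Pi.add_apply, Pi.smul_apply, mul_div_cancel₀ _ ht]
  module

lemma hasDerivAt_lyapunov {w : H} (hΦ : DifferentiableAt ℝ Φ (x t)) (hx : HasDerivAt x (x' t) t)
    (hv : HasDerivAt (anchoredVelocity α β Φ xstar x x') ((β - t) • gradient Φ (x t) + t • w) t) :
    HasDerivAt (lyapunov α β Φ xstar x x')
      ((2 * t - β) * (Φ (x t) - Φ xstar)
        - (t - β) * (α - 1) * ⟪gradient Φ (x t), x t - xstar⟫
        - (t - β) * t * β * ‖gradient Φ (x t)‖ ^ 2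
        + t * ⟪w, anchoredVelocity α β Φ xstar x x' t⟫) t := by
  have hweight : HasDerivAt (fun s : ℝ => s * (s - β)) (1 * (t - β) + t * 1) t :=
    (hasDerivAt_id t).mul ((hasDerivAt_id t).sub_const β)
  have hgap := (hasDerivAt_comp_inner_gradient hΦ hx).sub_const (Φ xstar)
  refine ((hweight.mul hgap).add (hv.norm_sq.const_mul (1 / 2))).congr_deriv ?_
  rw [inner_add_right, real_inner_smul_right, real_inner_smul_right,
    real_inner_comm (gradient Φ (x t)), inner_gradient_anchoredVelocity, real_inner_comm w]
  ring

lemma sq_mul_gap_add_norm_sq_le_lyapunov (hmin : Φ xstar ≤ Φ (x t)) (ht : 0 ≤ t)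
    (htβ : 2 * β ≤ t) :
    t ^ 2 / 2 * (Φ (x t) - Φ xstar) + 1 / 2 * ‖anchoredVelocity α β Φ xstar x x' t‖ ^ 2
      ≤ lyapunov α β Φ xstar x x' t := by
  have hweight : t ^ 2 / 2 ≤ t * (t - β) := by nlinarith
  exact add_le_add (mul_le_mul_of_nonneg_right hweight (sub_nonneg.2 hmin)) le_rfl

lemma sq_mul_gap_le_lyapunov (hmin : Φ xstar ≤ Φ (x t)) (ht : 0 ≤ t) (htβ : 2 * β ≤ t) :
    t ^ 2 * (Φ (x t) - Φ xstar) ≤ 2 * lyapunov α β Φ xstar x x' t := by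
  have hE := sq_mul_gap_add_norm_sq_le_lyapunov (α := α) (x' := x') hmin ht htβ
  linarith [sq_nonneg ‖anchoredVelocity α β Φ xstar x x' t‖]

lemma lyapunov_nonneg (hmin : Φ xstar ≤ Φ (x t)) (ht : 0 ≤ t) (htβ : 2 * β ≤ t) :
    0 ≤ lyapunov α β Φ xstar x x' t := by
  have hgap : 0 ≤ t ^ 2 * (Φ (x t) - Φ xstar) := mul_nonneg (sq_nonneg t) (sub_nonneg.2 hmin)
  linarith [sq_mul_gap_le_lyapunov (α := α) (x' := x') hmin ht htβ]

lemma norm_anchoredVelocity_le_lyapunov_add_one (hmin : Φ xstar ≤ Φ (x t)) (ht : 0 ≤ t)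
    (htβ : 2 * β ≤ t) :
    ‖anchoredVelocity α β Φ xstar x x' t‖ ≤ lyapunov α β Φ xstar x x' t + 1 := by
  have hE := sq_mul_gap_add_norm_sq_le_lyapunov (α := α) (x' := x') hmin ht htβ
  have hgap : 0 ≤ t ^ 2 / 2 * (Φ (x t) - Φ xstar) :=
    mul_nonneg (by positivity) (sub_nonneg.2 hmin)
  linarith [sq_nonneg (‖anchoredVelocity α β Φ xstar x x' t‖ - 1)]

lemma deriv_lyapunov_le_gap_add_inner {w : H} (hα : 3 ≤ α) (hβ : 0 ≤ β) (ht : 0 ≤ t) (htβ : β ≤ t)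
    (hmin : Φ xstar ≤ Φ (x t)) (hstar : Φ (x t) - Φ xstar ≤ ⟪gradient Φ (x t), x t - xstar⟫)
    (hΦ : DifferentiableAt ℝ Φ (x t)) (hx : HasDerivAt x (x' t) t)
    (hv : HasDerivAt (anchoredVelocity α β Φ xstar x x') ((β - t) • gradient Φ (x t) + t • w) t) :
    deriv (lyapunov α β Φ xstar x x') t ≤
      (α - 2) * β * (Φ (x t) - Φ xstar) + t * ⟪w, anchoredVelocity α β Φ xstar x x' t⟫ := by
  rw [(hasDerivAt_lyapunov hΦ hx hv).deriv]
  have htβ' : 0 ≤ t - β := sub_nonneg.2 htβ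
  have hconv : (t - β) * (α - 1) * (Φ (x t) - Φ xstar) ≤
      (t - β) * (α - 1) * ⟪gradient Φ (x t), x t - xstar⟫ :=
    mul_le_mul_of_nonneg_left hstar (mul_nonneg htβ' (by linarith))
  have hhessian : 0 ≤ (t - β) * t * β * ‖gradient Φ (x t)‖ ^ 2 := by positivity
  have hfriction : 0 ≤ (α - 3) * t * (Φ (x t) - Φ xstar) :=
    mul_nonneg (mul_nonneg (sub_nonneg.2 hα) ht) (sub_nonneg.2 hmin)
  linarith

lemma deriv_lyapunov_le {w : H} (hα : 3 ≤ α) (hβ : 0 ≤ β) (ht : 0 < t) (htβ : 2 * β ≤ t)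
    (hmin : Φ xstar ≤ Φ (x t)) (hstar : Φ (x t) - Φ xstar ≤ ⟪gradient Φ (x t), x t - xstar⟫)
    (hΦ : DifferentiableAt ℝ Φ (x t)) (hx : HasDerivAt x (x' t) t)
    (hv : HasDerivAt (anchoredVelocity α β Φ xstar x x') ((β - t) • gradient Φ (x t) + t • w) t) :
    deriv (lyapunov α β Φ xstar x x') t ≤
      (2 * (α - 2) * β / t ^ 2 + t * ‖w‖) * (lyapunov α β Φ xstar x x' t + 1) := by
  have hα2 : 0 ≤ α - 2 := by linarith
  have hgap : (α - 2) * β * (Φ (x t) - Φ xstar) ≤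
      2 * (α - 2) * β / t ^ 2 * (lyapunov α β Φ xstar x x' t + 1) := by
    have hE := sq_mul_gap_le_lyapunov (α := α) (x' := x') hmin ht.le htβ
    calc (α - 2) * β * (Φ (x t) - Φ xstar)
        = (α - 2) * β / t ^ 2 * (t ^ 2 * (Φ (x t) - Φ xstar)) := by field_simp
      _ ≤ (α - 2) * β / t ^ 2 * (2 * (lyapunov α β Φ xstar x x' t + 1)) := by
        refine mul_le_mul_of_nonneg_left ?_ (by positivity)
        linarith
      _ = 2 * (α - 2) * β / t ^ 2 * (lyapunov α β Φ xstar x x' t + 1) := by ring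
  have hforce : t * ⟪w, anchoredVelocity α β Φ xstar x x' t⟫ ≤
      t * ‖w‖ * (lyapunov α β Φ xstar x x' t + 1) := by
    rw [mul_assoc]
    gcongr
    exact (real_inner_le_norm _ _).trans (mul_le_mul_of_nonneg_left
      (norm_anchoredVelocity_le_lyapunov_add_one hmin ht.le htβ) (norm_nonneg _))
  linarith [deriv_lyapunov_le_gap_add_inner hα hβ ht.le (by linarith) hmin hstar hΦ hx hv]

end Lyapunov

section Trajectory

variable {α β t₁ : ℝ} {Φ : H → ℝ} {xstar : H} {g x x' x'' : ℝ → H}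

lemma bddAbove_lyapunov_image_Ici (hα : 3 ≤ α) (hβ : 0 ≤ β) (ht₁ : 0 < t₁) (ht₁β : 2 * β ≤ t₁)
    (hΦ : Differentiable ℝ Φ) (hΦ' : Differentiable ℝ (gradient Φ)) (hmin : ∀ z, Φ xstar ≤ Φ z)
    (hstar : ∀ z, Φ z - Φ xstar ≤ ⟪gradient Φ z, z - xstar⟫)
    (hgint : IntegrableOn (fun t => t * ‖g t‖) (Ici t₁))
    (hx' : ∀ t ∈ Ici t₁, HasDerivAt x (x' t) t) (hx'' : ∀ t ∈ Ici t₁, HasDerivAt x' (x'' t) t)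
    (heq : ∀ t ∈ Ici t₁,
      x'' t + (α / t) • x' t + β • (fderiv ℝ (gradient Φ) (x t)) (x' t)
        + gradient Φ (x t) = g t) :
    BddAbove (lyapunov α β Φ xstar x x' '' Ici t₁) := by
  have hpos (t : ℝ) (ht : t ∈ Ici t₁) : 0 < t := ht₁.trans_le ht
  have hv (t : ℝ) (ht : t ∈ Ici t₁) := hasDerivAt_anchoredVelocity (xstar := xstar)
    (hpos t ht).ne' (hΦ' _) (hx' t ht) (hx'' t ht) (heq t ht)
  suffices BddAbove ((fun t => lyapunov α β Φ xstar x x' t + 1) '' Ici t₁) by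
    obtain ⟨M, hM⟩ := this
    exact ⟨M, forall_mem_image.2 fun t ht => (lt_add_one _).le.trans (forall_mem_image.1 hM ht)⟩
  refine bddAbove_image_Ici_of_deriv_le_mul
    (k := fun t => 2 * (α - 2) * β / t ^ 2 + t * ‖g t‖) (fun t ht => ?_) (fun t ht => ?_)
    ((integrableOn_Ici_div_sq _ ht₁).add hgint) (fun t ht => ?_)
  · linarith [lyapunov_nonneg (α := α) (x' := x') (hmin (x t)) (hpos t ht).le (ht₁β.trans ht)]
  · exact ((hasDerivAt_lyapunov (hΦ _) (hx' t ht) (hv t ht)).add_const 1).differentiableAt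
  · rw [deriv_add_const]
    exact deriv_lyapunov_le hα hβ (hpos t ht) (ht₁β.trans ht) (hmin _) (hstar _) (hΦ _)
      (hx' t ht) (hv t ht)

end Trajectory

theorem stmt18_general (α β t₀ : ℝ) (hα : 3 ≤ α) (hβ : 0 ≤ β) (ht₀ : 0 < t₀)
    (Φ : H → ℝ) (hΦ : Differentiable ℝ Φ) (hΦ' : Differentiable ℝ (gradient Φ))
    (xstar : H) (hmin : ∀ z, Φ xstar ≤ Φ z)
    (hstar : ∀ z, Φ z - Φ xstar ≤ ⟪gradient Φ z, z - xstar⟫)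
    (g : ℝ → H) (hgint : IntegrableOn (fun t => t * ‖g t‖) (Ici t₀))
    (x x' x'' : ℝ → H)
    (hx' : ∀ t ∈ Ici t₀, HasDerivAt x (x' t) t)
    (hx'' : ∀ t ∈ Ici t₀, HasDerivAt x' (x'' t) t)
    (heq : ∀ t ∈ Ici t₀,
      x'' t + (α / t) • x' t + β • (fderiv ℝ (gradient Φ) (x t)) (x' t)
        + gradient Φ (x t) = g t) :
    ∃ C : ℝ, ∀ t, t₀ ≤ t → Φ (x t) - Φ xstar ≤ C / t ^ 2 := by
  obtain ⟨t₁, ht₀₁, ht₁β⟩ : ∃ t₁, t₀ ≤ t₁ ∧ 2 * β ≤ t₁ :=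
    ⟨max t₀ (2 * β), le_max_left _ _, le_max_right _ _⟩
  have ht₁ : 0 < t₁ := ht₀.trans_le ht₀₁
  have hsub : Ici t₁ ⊆ Ici t₀ := Ici_subset_Ici.2 ht₀₁
  obtain ⟨M, hM⟩ := bddAbove_lyapunov_image_Ici hα hβ ht₁ ht₁β hΦ hΦ' hmin hstar
    (hgint.mono_set hsub) (fun t ht => hx' t (hsub ht)) (fun t ht => hx'' t (hsub ht))
    (fun t ht => heq t (hsub ht))
  have htail : BddAbove ((fun t => t ^ 2 * (Φ (x t) - Φ xstar)) '' Ici t₁) := by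
    refine ⟨2 * M, forall_mem_image.2 fun t ht => ?_⟩
    linarith [forall_mem_image.1 hM ht,
      sq_mul_gap_le_lyapunov (α := α) (x' := x') (hmin (x t)) (ht₁.le.trans ht) (ht₁β.trans ht)]
  have hcont : ContinuousOn (fun t => t ^ 2 * (Φ (x t) - Φ xstar)) (Icc t₀ t₁) :=
    (continuousOn_id.pow 2).mul ((hΦ.continuous.comp_continuousOn fun t ht =>
      (hx' t ht.1).continuousAt.continuousWithinAt).sub continuousOn_const)
  obtain ⟨C, hC⟩ := bddAbove_image_Ici_of_continuousOn_Icc ht₀₁ hcont htail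
  refine ⟨C, fun t ht => ?_⟩
  rw [le_div_iff₀' (pow_pos (ht₀.trans_le ht) 2)]
  exact forall_mem_image.1 hC ht

theorem stmt18 (α β t₀ : ℝ) (hα : 3 ≤ α) (hβ : 0 < β) (ht₀ : 0 < t₀)
    (Φ : H → ℝ) (hconv : ConvexOn ℝ Set.univ Φ) (hΦ : ContDiff ℝ 2 Φ)
    (xstar : H) (hmin : ∀ z, Φ xstar ≤ Φ z)
    (hlip : ∀ s : Set H, Bornology.IsBounded s →
      ∃ K : NNReal, LipschitzOnWith K (gradient Φ) s)
    (g : ℝ → H) (hg : ContinuousOn g (Set.Ici t₀))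
    (hgint : IntegrableOn (fun t => t * ‖g t‖) (Set.Ici t₀))
    (x x' x'' : ℝ → H)
    (hx' : ∀ t ∈ Set.Ici t₀, HasDerivAt x (x' t) t)
    (hx'' : ∀ t ∈ Set.Ici t₀, HasDerivAt x' (x'' t) t)
    (hcont : ContinuousOn x'' (Set.Ici t₀))
    (heq : ∀ t ∈ Set.Ici t₀,
      x'' t + (α / t) • x' t + β • (fderiv ℝ (gradient Φ) (x t)) (x' t)
        + gradient Φ (x t) = g t) :
    ∃ C : ℝ, ∀ t, t₀ ≤ t → Φ (x t) - Φ xstar ≤ C / t ^ 2 := by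
  exact stmt18_general α β t₀ hα hβ.le ht₀ Φ (hΦ.differentiable two_ne_zero)
    ((contDiff_gradient hΦ one_add_one_eq_two.le).differentiable one_ne_zero) xstar hmin
    (fun z => sub_le_inner_gradient_of_convexOn hconv (mem_univ z) (mem_univ xstar)
      (hΦ.differentiable two_ne_zero z)) g hgint x x' x'' hx' hx'' heq
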